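/- arXiv:2105.12630 — 5 statements merged into one kernel-verified Lean document; each statement's English description precedes it below -/
import Mathlib

section
/- Let G be a t.d.l.c. group, let g ∈ G, and let U be a compact open subgroup of G such that the indices [U : U ∩ g^{-1}Ug] and [U : U ∩ gUg^{-1}] are (finite and) coprime. Then for every compact open subgroup V of G one has [U : U ∩ g^{-1}Ug] ≤ [V : V ∩ g^{-1}Vg]; that is, U is tidy for g and the scale satisfies s(g) = [U : U ∩ g^{-1}Ug]. -/
/-- The conjugate subgroup `g⁻¹ U g`. -/
def conjSubgroup {G : Type*} [Group G] (g : G) (U : Subgroup G) : Subgroup G :=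
  U.map (MulAut.conj g⁻¹).toMonoidHom

/-!
The ratio `[U : U ∩ f U] / [f U : U ∩ f U]` is the same for all subgroups `U` in a commensurability
class preserved by the injective endomorphism `f`. If numerator and denominator are coprime for `U`,
this fraction is in lowest terms, so its numerator divides the numerator `[V : V ∩ f V]` for every
other `V` in the class. Compact open subgroups are pairwise commensurable, and for conjugation
by `g⁻¹` the index `[f U : U ∩ f U]` is `[U : U ∩ g U g⁻¹]`.
-/

section Commensurable

open Subgroup

variable {G G' : Type*} [Group G] [Group G'] {A B C K U V : Subgroup G}

theorem relIndex_mul_relIndex_comm (hA : K ≤ A) (hB : K ≤ B) :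
    K.relIndex A * A.relIndex B = K.relIndex B * B.relIndex A := by
  have indexA := relIndex_mul_relIndex K (A ⊓ B) A (le_inf hA hB) inf_le_left
  have indexB := relIndex_mul_relIndex K (A ⊓ B) B (le_inf hA hB) inf_le_right
  rw [inf_relIndex_left] at indexA
  rw [inf_relIndex_right] at indexB
  rw [← indexA, ← indexB]
  ring

/-- The generalized index `[B : A ∩ B] / [A : A ∩ B]` of `A` in `B`, which extends `[B : A]` from
pairs `A ≤ B` to commensurable pairs. The order of the arguments is that of `Subgroup.relIndex`;
the value is `0` if `A` and `B` are not commensurable. -/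
noncomputable def relIndexRatio (A B : Subgroup G) : ℚ :=
  A.relIndex B / B.relIndex A

theorem relIndexRatio_eq_div (hA : K ≤ A) (hB : K ≤ B) (hKA : K.relIndex A ≠ 0) :
    relIndexRatio A B = K.relIndex B / K.relIndex A := by
  have hBA : B.relIndex A ≠ 0 := mt (relIndex_eq_zero_of_le_left hB) hKA
  rw [relIndexRatio, div_eq_div_iff (mod_cast hBA) (mod_cast hKA), mul_comm]
  exact_mod_cast relIndex_mul_relIndex_comm hA hB

theorem relIndexRatio_mul_relIndexRatio (hAB : Commensurable A B) (hBC : Commensurable B C) :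
    relIndexRatio A B * relIndexRatio B C = relIndexRatio A C := by
  have hKA : (A ⊓ (B ⊓ C)).relIndex A ≠ 0 := by
    rw [inf_relIndex_left]
    exact relIndex_inf_ne_zero hAB.2 (hAB.trans hBC).2
  have hKB : (A ⊓ (B ⊓ C)).relIndex B ≠ 0 := by
    rw [inf_left_comm, inf_relIndex_left]
    exact relIndex_inf_ne_zero hAB.1 hBC.2
  have leA : A ⊓ (B ⊓ C) ≤ A := inf_le_left
  have leB : A ⊓ (B ⊓ C) ≤ B := inf_le_right.trans inf_le_left
  have leC : A ⊓ (B ⊓ C) ≤ C := inf_le_right.trans inf_le_right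
  rw [relIndexRatio_eq_div leA leB hKA, relIndexRatio_eq_div leB leC hKB,
    relIndexRatio_eq_div leA leC hKA, mul_comm, div_mul_div_cancel₀ (mod_cast hKB)]

theorem relIndexRatio_mul_relIndexRatio_symm (hAB : Commensurable A B) :
    relIndexRatio A B * relIndexRatio B A = 1 := by
  have hA : (A.relIndex B : ℚ) ≠ 0 := mod_cast hAB.1
  have hB : (B.relIndex A : ℚ) ≠ 0 := mod_cast hAB.2
  rw [relIndexRatio, relIndexRatio, div_mul_div_cancel₀ hB, div_self hA]

theorem relIndexRatio_map_map {f : G →* G'} (hf : Function.Injective f) :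
    relIndexRatio (A.map f) (B.map f) = relIndexRatio A B := by
  simp only [relIndexRatio, relIndex_map_map_of_injective _ _ hf]

theorem commensurable_map_map {f : G →* G'} (hf : Function.Injective f) :
    Commensurable (A.map f) (B.map f) ↔ Commensurable A B := by
  simp only [Commensurable, relIndex_map_map_of_injective _ _ hf]

variable {f : G →* G}

theorem commensurable_map_self_of_commensurable (hf : Function.Injective f)
    (hfU : Commensurable (U.map f) U) (hUV : Commensurable U V) : Commensurable (V.map f) V :=
  ((commensurable_map_map hf).2 hUV.symm).trans (hfU.trans hUV)

theorem relIndexRatio_map_self_eq_of_commensurable (hf : Function.Injective f)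
    (hfU : Commensurable (U.map f) U) (hUV : Commensurable U V) :
    relIndexRatio (V.map f) V = relIndexRatio (U.map f) U := by
  have hfVU : Commensurable (V.map f) (U.map f) := (commensurable_map_map hf).2 hUV.symm
  calc relIndexRatio (V.map f) V
      = relIndexRatio (V.map f) (U.map f) * relIndexRatio (U.map f) U * relIndexRatio U V := by
        rw [relIndexRatio_mul_relIndexRatio hfVU hfU,
          relIndexRatio_mul_relIndexRatio (hfVU.trans hfU) hUV]
    _ = relIndexRatio V U * relIndexRatio U V * relIndexRatio (U.map f) U := by
        rw [relIndexRatio_map_map hf, mul_right_comm]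
    _ = relIndexRatio (U.map f) U := by
        rw [relIndexRatio_mul_relIndexRatio_symm hUV.symm, one_mul]

theorem coprime_indices_tidy_general (hf : Function.Injective f)
    (hfU : Commensurable (U.map f) U) (hUV : Commensurable U V)
    (hcop : Nat.Coprime ((U.map f).relIndex U) (U.relIndex (U.map f))) :
    (U.map f).relIndex U ∣ (V.map f).relIndex V := by
  have hfV : Commensurable (V.map f) V := commensurable_map_self_of_commensurable hf hfU hUV
  have ratio_eq := relIndexRatio_map_self_eq_of_commensurable hf hfU hUV
  rw [relIndexRatio, relIndexRatio,
    div_eq_div_iff (mod_cast hfV.2) (mod_cast hfU.2)] at ratio_eq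
  exact hcop.dvd_of_dvd_mul_right (Dvd.intro _ (mod_cast ratio_eq.symm))

end Commensurable

theorem relIndex_conjSubgroup_inv {G : Type*} [Group G] (g : G) (U : Subgroup G) :
    (conjSubgroup g⁻¹ U).relIndex U = U.relIndex (conjSubgroup g U) := by
  have conj_conj_inv : conjSubgroup g (conjSubgroup g⁻¹ U) = U := by
    ext x
    simp [conjSubgroup, Subgroup.mem_map, mul_assoc]
  calc (conjSubgroup g⁻¹ U).relIndex U
      = (conjSubgroup g (conjSubgroup g⁻¹ U)).relIndex (conjSubgroup g U) :=
        (Subgroup.relIndex_map_map_of_injective _ _ (MulAut.conj g⁻¹).injective).symm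
    _ = U.relIndex (conjSubgroup g U) := by rw [conj_conj_inv]

theorem relIndex_ne_zero_of_isOpen_of_isCompact {G : Type*} [Group G] [TopologicalSpace G]
    [SeparatelyContinuousMul G] {K A : Subgroup G} (hK : IsOpen (K : Set G))
    (hA : IsCompact (A : Set G)) : K.relIndex A ≠ 0 := by
  have : CompactSpace A := isCompact_iff_compactSpace.mp hA
  have : SeparatelyContinuousMul A := separatelyContinuousMul_induced A.subtype
  have : Finite (A ⧸ K.subgroupOf A) :=
    Subgroup.quotient_finite_of_isOpen _ (hK.preimage continuous_subtype_val)
  exact Subgroup.index_ne_zero_of_finite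

/-- Let `G` be a t.d.l.c. group, `g ∈ G` and `U` a compact open subgroup such that the
indices `[U : U ∩ g⁻¹Ug]` and `[U : U ∩ gUg⁻¹]` are finite and coprime.  Then `U` is tidy
for `g`: for every compact open subgroup `V` of `G` one has
`[U : U ∩ g⁻¹Ug] ≤ [V : V ∩ g⁻¹Vg]`, i.e. the scale satisfies `s(g) = [U : U ∩ g⁻¹Ug]`. -/
theorem coprime_indices_tidy {G : Type*} [Group G] [TopologicalSpace G]
    [IsTopologicalGroup G] [T2Space G] [TotallyDisconnectedSpace G] [LocallyCompactSpace G]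
    (g : G) (U : Subgroup G) (hUc : IsCompact (U : Set G)) (hUo : IsOpen (U : Set G))
    (hpos₁ : 0 < (conjSubgroup g U).relIndex U)
    (hpos₂ : 0 < (conjSubgroup g⁻¹ U).relIndex U)
    (hcop : Nat.Coprime ((conjSubgroup g U).relIndex U) ((conjSubgroup g⁻¹ U).relIndex U)) :
    ∀ V : Subgroup G, IsCompact (V : Set G) → IsOpen (V : Set G) →
      (conjSubgroup g U).relIndex U ≤ (conjSubgroup g V).relIndex V := by
  intro V hVc hVo
  rw [relIndex_conjSubgroup_inv] at hpos₂ hcop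
  have hgU : (conjSubgroup g U).Commensurable U := ⟨hpos₁.ne', hpos₂.ne'⟩
  have hUV : U.Commensurable V :=
    ⟨relIndex_ne_zero_of_isOpen_of_isCompact hUo hVc,
      relIndex_ne_zero_of_isOpen_of_isCompact hVo hUc⟩
  have hinj := (MulAut.conj g⁻¹).injective
  have hgV : (conjSubgroup g V).Commensurable V :=
    commensurable_map_self_of_commensurable hinj hgU hUV
  exact Nat.le_of_dvd (Nat.pos_of_ne_zero hgV.1) (coprime_indices_tidy_general hinj hgU hUV hcop)
end

section
/- Let G be a second countable profinite group and let (G_i) and (H_j) be two composition series of G. Then for every finite simple group A, the cardinality of the set of indices i such that G_i/G_{i+1} ≅ A equals the cardinality of the set of indices j such that H_j/H_{j+1} ≅ A; that is, any two composition series of G have, up to isomorphism and permutation, the same composition factors appearing with the same (finite or countably infinite) multiplicities. -/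
/-- A composition series of a profinite group `G`: a descending chain
`G = H 0 ⊵ H 1 ⊵ ⋯` of closed subgroups with trivial intersection such that at each step
either `H (i+1)` is a proper normal subgroup of `H i` with simple quotient, or the chain
has already reached the trivial subgroup (this uniformly encodes finite series, padded by
the trivial subgroup, and infinite series). -/
structure ProfiniteCompositionSeries (G : Type*) [Group G] [TopologicalSpace G] where
  H : ℕ → Subgroup G
  top_eq : H 0 = ⊤
  isClosed : ∀ i, IsClosed (H i : Set G)
  antitone : ∀ i, H (i + 1) ≤ H i
  iInf_eq_bot : ⨅ i, H i = ⊥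
  normal : ∀ i, ((H (i + 1)).subgroupOf (H i)).Normal
  step : ∀ i, (H (i + 1) < H i ∧
      (letI := normal i
       IsSimpleGroup (↥(H i) ⧸ (H (i + 1)).subgroupOf (H i)))) ∨ H i = ⊥

variable {G : Type*} [Group G] [TopologicalSpace G]

/-- The `i`-th composition factor `H i / H (i+1)` of a composition series. -/
def ProfiniteCompositionSeries.factor (S : ProfiniteCompositionSeries G) (i : ℕ) :
    Type _ :=
  letI := S.normal i
  ↥(S.H i) ⧸ (S.H (i + 1)).subgroupOf (S.H i)

noncomputable instance (S : ProfiniteCompositionSeries G) (i : ℕ) : Group (S.factor i) :=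
  letI := S.normal i
  inferInstanceAs (Group (↥(S.H i) ⧸ (S.H (i + 1)).subgroupOf (S.H i)))

/-!
Let `S_i / S_{i+1}` and `T_j / T_{j+1}` run over the factors of the two series. Every term of `T` is
subnormal in `G`, so the image of `S_i ∩ T_j` in the simple group `S_i / S_{i+1}` is trivial or
everything. It is everything for `j = 0`, and by compactness it is trivial for large `j`, since the
closed subgroups `T_j` intersect trivially. At the last `j` where it is everything, simplicity of
`T_j / T_{j+1}` forces `S_i ∩ T_j` to surject onto both factors with the same kernel. This relation
between `i` and `j` is symmetric and determines `j` from `i`, hence is a bijection between the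
factors of `S` and those of `T`, and related factors are isomorphic.
-/

section SectionImage

variable {Γ Q R : Type*} [Group Γ] [Group Q] [Group R]

theorem ker_eq_ker_of_ker_le [IsSimpleGroup R] {f : Γ →* Q} {g : Γ →* R}
    (hg : Function.Surjective g) (hf : f ≠ 1) (hle : g.ker ≤ f.ker) : g.ker = f.ker := by
  rcases (f.normal_ker.map g hg).eq_bot_or_eq_top with hbot | htop
  · exact le_antisymm hle ((Subgroup.map_eq_bot_iff _).1 hbot)
  · refine absurd (MonoidHom.ker_eq_top_iff.1 ?_) hf
    rw [← sup_eq_left.2 hle, ← Subgroup.comap_map_eq, htop, Subgroup.comap_top]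

variable {H L : Subgroup Γ} {f : H →* Q} {g : L →* R}

/-- The image of `H ∩ L` under a homomorphism `f` defined on the subgroup `H`. When `f` is the
quotient map of a section `H / K`, this is the subgroup `(H ∩ L)K / K` cut out by `L`. -/
def sectionImage (f : H →* Q) (L : Subgroup Γ) : Subgroup Q :=
  (L.subgroupOf H).map f

theorem mem_sectionImage {q : Q} : q ∈ sectionImage f L ↔ ∃ x : H, (x : Γ) ∈ L ∧ f x = q :=
  Iff.rfl

theorem surjective_comp_inclusion_of_sectionImage_eq_top {P : Subgroup Γ} (hPH : P ≤ H)
    (hP : H ⊓ L ≤ P) (h : sectionImage f L = ⊤) :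
    Function.Surjective (f.comp (Subgroup.inclusion hPH)) := by
  intro q
  obtain ⟨x, hxL, rfl⟩ := mem_sectionImage.1 (h ▸ Subgroup.mem_top q)
  exact ⟨⟨x, hP ⟨x.2, hxL⟩⟩, rfl⟩

theorem sectionImage_top (hf : Function.Surjective f) : sectionImage f ⊤ = ⊤ := by
  rw [sectionImage, Subgroup.top_subgroupOf, Subgroup.map_top_of_surjective f hf]

theorem sectionImage_eq_bot_iff :
    sectionImage f L = ⊥ ↔ ∀ x (hxH : x ∈ H), x ∈ L → f ⟨x, hxH⟩ = 1 :=
  (Subgroup.map_eq_bot_iff _).trans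
    ⟨fun h x hxH hxL ↦ @h ⟨x, hxH⟩ hxL, fun h x hxL ↦ h x x.2 hxL⟩

theorem sectionImage_eq_bot_or_eq_top [IsSimpleGroup Q] (hf : Function.Surjective f)
    (hL : L.IsSubnormal) : sectionImage f L = ⊥ ∨ sectionImage f L = ⊤ :=
  (hL.subgroupOf.map hf).eq_bot_or_top_of_isSimpleGroup inferInstance

/-- Two homomorphisms `f` and `g` on subgroups `H` and `L` are linked if both restrict to
surjections from `H ∩ L` and these restrictions have the same kernel. The kernel condition is
stated elementwise, which makes the relation symmetric on the nose. -/
structure AreLinked (f : H →* Q) (g : L →* R) : Prop where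
  sectionImage_left : sectionImage f L = ⊤
  sectionImage_right : sectionImage g H = ⊤
  eq_one_iff : ∀ x (hxH : x ∈ H) (hxL : x ∈ L), f ⟨x, hxH⟩ = 1 ↔ g ⟨x, hxL⟩ = 1

namespace AreLinked

theorem symm (h : AreLinked f g) : AreLinked g f :=
  ⟨h.sectionImage_right, h.sectionImage_left, fun x hxL hxH ↦ (h.eq_one_iff x hxH hxL).symm⟩

theorem nonempty_mulEquiv (h : AreLinked f g) : Nonempty (Q ≃* R) := by
  let f' := f.comp (Subgroup.inclusion (inf_le_left : H ⊓ L ≤ H))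
  let g' := g.comp (Subgroup.inclusion (inf_le_right : H ⊓ L ≤ L))
  have hf' : Function.Surjective f' :=
    surjective_comp_inclusion_of_sectionImage_eq_top _ le_rfl h.sectionImage_left
  have hg' : Function.Surjective g' :=
    surjective_comp_inclusion_of_sectionImage_eq_top _ (inf_comm _ _).le h.sectionImage_right
  have hker : f'.ker = g'.ker := Subgroup.ext fun x ↦ h.eq_one_iff x x.2.1 x.2.2
  exact ⟨(QuotientGroup.quotientKerEquivOfSurjective f' hf').symm.trans
    ((QuotientGroup.quotientMulEquivOfEq hker).trans
      (QuotientGroup.quotientKerEquivOfSurjective g' hg'))⟩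

theorem of_sectionImage_eq_top [Nontrivial Q] [IsSimpleGroup R] (hg : Function.Surjective g)
    (hH : H.IsSubnormal) (hfL : sectionImage f L = ⊤)
    (hker : ∀ x (hxH : x ∈ H) (hxL : x ∈ L), g ⟨x, hxL⟩ = 1 → f ⟨x, hxH⟩ = 1) :
    AreLinked f g := by
  let f' := f.comp (Subgroup.inclusion (inf_le_left : H ⊓ L ≤ H))
  let g' := g.comp (Subgroup.inclusion (inf_le_right : H ⊓ L ≤ L))
  have hf' : f' ≠ 1 := fun hone ↦ by
    obtain ⟨q, hq⟩ := exists_ne (1 : Q)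
    obtain ⟨x, rfl⟩ :=
      surjective_comp_inclusion_of_sectionImage_eq_top (inf_le_left : H ⊓ L ≤ H) le_rfl hfL q
    exact hq (DFunLike.congr_fun hone x)
  have hgH : sectionImage g H = ⊤ := by
    refine (sectionImage_eq_bot_or_eq_top hg hH).resolve_left fun hbot ↦ hf' ?_
    rw [sectionImage_eq_bot_iff] at hbot
    exact MonoidHom.ext fun x ↦ hker x x.2.1 x.2.2 (hbot x x.2.2 x.2.1)
  have hg' : Function.Surjective g' :=
    surjective_comp_inclusion_of_sectionImage_eq_top _ (inf_comm _ _).le hgH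
  have hker' : g'.ker = f'.ker := ker_eq_ker_of_ker_le hg' hf' fun x ↦ hker x x.2.1 x.2.2
  exact ⟨hfL, hgH, fun x hxH hxL ↦ (SetLike.ext_iff.1 hker' ⟨x, hxH, hxL⟩).symm⟩

end AreLinked

end SectionImage

theorem exists_disjoint_of_iInf_eq_bot {Γ ι : Type*} [Group Γ] [TopologicalSpace Γ]
    [CompactSpace Γ] [Nonempty ι] {L : ι → Subgroup Γ} (hdir : Directed (· ≥ ·) L)
    (hclosed : ∀ j, IsClosed (L j : Set Γ)) (hinf : ⨅ j, L j = ⊥) {C : Set Γ} (hC : IsClosed C)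
    (hone : 1 ∉ C) : ∃ j, Disjoint C (L j) := by
  have hempty : C ∩ ⋂ j, (L j : Set Γ) = ∅ := by
    rw [← Subgroup.coe_iInf, hinf, Subgroup.coe_bot, Set.inter_singleton_eq_empty]
    exact hone
  obtain ⟨j, hj⟩ := hC.isCompact.elim_directed_family_closed _ hclosed hempty hdir
  exact ⟨j, Set.disjoint_iff_inter_eq_empty.2 hj⟩

open scoped Pointwise in
theorem exists_notMem_sectionImage {Γ Q ι : Type*} [Group Γ] [Group Q] [TopologicalSpace Γ]
    [SeparatelyContinuousMul Γ] [CompactSpace Γ] [Nonempty ι] {L : ι → Subgroup Γ}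
    (hdir : Directed (· ≥ ·) L) (hclosed : ∀ j, IsClosed (L j : Set Γ)) (hinf : ⨅ j, L j = ⊥)
    {H : Subgroup Γ} {f : H →* Q} (hker : IsClosed (f.ker.map H.subtype : Set Γ)) {x : H}
    (hx : f x ≠ 1) : ∃ j, f x ∉ sectionImage f (L j) := by
  have hone : (1 : Γ) ∉ (x : Γ) • (f.ker.map H.subtype : Set Γ) := by
    rintro ⟨_, ⟨k, hk, rfl⟩, hxk⟩
    have hxk : x * k = 1 := Subtype.ext hxk
    exact hx (by simpa [MonoidHom.mem_ker.1 hk] using congrArg f hxk)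
  obtain ⟨j, hj⟩ := exists_disjoint_of_iInf_eq_bot hdir hclosed hinf (hker.leftCoset (x : Γ)) hone
  refine ⟨j, fun hmem ↦ ?_⟩
  obtain ⟨y, hyL, hyx⟩ := mem_sectionImage.1 hmem
  refine Set.disjoint_left.1 hj ⟨_, ⟨x⁻¹ * y, ?_, rfl⟩, ?_⟩ hyL
  · simp [MonoidHom.mem_ker, hyx]
  · simp

namespace ProfiniteCompositionSeries

/-- The indices `i` at which the series strictly decreases; the remaining indices are the padding
of a finite series. -/
def properSteps (S : ProfiniteCompositionSeries G) : Set ℕ :=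
  {i | S.H (i + 1) < S.H i}

/-- The quotient map `S_i → S_i / S_{i+1}` onto a composition factor. -/
noncomputable def proj (S : ProfiniteCompositionSeries G) (i : ℕ) : S.H i →* S.factor i :=
  letI := S.normal i
  QuotientGroup.mk' ((S.H (i + 1)).subgroupOf (S.H i))

variable (S T : ProfiniteCompositionSeries G)

theorem proj_surjective (i : ℕ) : Function.Surjective (S.proj i) :=
  letI := S.normal i
  QuotientGroup.mk'_surjective _

theorem ker_proj (i : ℕ) : (S.proj i).ker = (S.H (i + 1)).subgroupOf (S.H i) :=
  letI := S.normal i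
  QuotientGroup.ker_mk' _

theorem proj_eq_one_iff {i : ℕ} {x : S.H i} : S.proj i x = 1 ↔ (x : G) ∈ S.H (i + 1) := by
  rw [← MonoidHom.mem_ker, ker_proj, Subgroup.mem_subgroupOf]

theorem map_ker_proj (i : ℕ) : (S.proj i).ker.map (S.H i).subtype = S.H (i + 1) := by
  rw [ker_proj, Subgroup.map_subgroupOf_eq_of_le (S.antitone i)]

theorem antitone_H : Antitone S.H :=
  antitone_nat_of_succ_le S.antitone

theorem isSubnormal (i : ℕ) : (S.H i).IsSubnormal := by
  induction i with
  | zero => exact S.top_eq ▸ .top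
  | succ i ih => exact .step _ _ (S.antitone i) ih (S.normal i)

instance isSimpleGroup_factor (i : S.properSteps) : IsSimpleGroup (S.factor i) :=
  ((S.step i).resolve_right i.2.ne_bot).2

theorem exists_sectionImage_ne_top [SeparatelyContinuousMul G] [CompactSpace G]
    (i : S.properSteps) : ∃ j, sectionImage (S.proj i) (T.H j) ≠ ⊤ := by
  obtain ⟨q, hq⟩ := exists_ne (1 : S.factor i)
  obtain ⟨x, rfl⟩ := S.proj_surjective i q
  have hker : IsClosed ((S.proj i).ker.map (S.H i).subtype : Set G) := by
    rw [map_ker_proj]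
    exact S.isClosed _
  obtain ⟨j, hj⟩ := exists_notMem_sectionImage T.antitone_H.directed_ge T.isClosed T.iInf_eq_bot
    hker hq
  exact ⟨j, fun htop ↦ hj (htop ▸ Subgroup.mem_top _)⟩

theorem exists_sectionImage_eq_top_and_succ_eq_bot [SeparatelyContinuousMul G] [CompactSpace G]
    (i : S.properSteps) :
    ∃ j, sectionImage (S.proj i) (T.H j) = ⊤ ∧ sectionImage (S.proj i) (T.H (j + 1)) = ⊥ := by
  have hzero : sectionImage (S.proj i) (T.H 0) = ⊤ := by
    rw [T.top_eq, sectionImage_top (S.proj_surjective i)]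
  by_contra! hstep
  have hall (j : ℕ) : sectionImage (S.proj i) (T.H j) = ⊤ := by
    induction j with
    | zero => exact hzero
    | succ j hj =>
      exact (sectionImage_eq_bot_or_eq_top (S.proj_surjective i)
        (T.isSubnormal (j + 1))).resolve_left (hstep j hj)
  obtain ⟨j, hj⟩ := S.exists_sectionImage_ne_top T i
  exact hj (hall j)

theorem exists_areLinked [SeparatelyContinuousMul G] [CompactSpace G] (i : S.properSteps) :
    ∃ j : T.properSteps, AreLinked (S.proj i) (T.proj j) := by
  obtain ⟨j, htop, hbot⟩ := S.exists_sectionImage_eq_top_and_succ_eq_bot T i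
  have hj : T.H (j + 1) < T.H j := (T.antitone j).lt_of_ne fun heq ↦
    bot_ne_top (by rw [← hbot, heq, htop])
  have : IsSimpleGroup (T.factor j) := T.isSimpleGroup_factor ⟨j, hj⟩
  refine ⟨⟨j, hj⟩, .of_sectionImage_eq_top (T.proj_surjective j) (S.isSubnormal i) htop ?_⟩
  exact fun x hxS hxT hx ↦ sectionImage_eq_bot_iff.1 hbot x hxS (T.proj_eq_one_iff.1 hx)

variable {S T}

theorem le_of_areLinked {i j k : ℕ} [Nontrivial (S.factor i)]
    (hj : AreLinked (S.proj i) (T.proj j)) (hk : AreLinked (S.proj i) (T.proj k)) : k ≤ j := by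
  by_contra! hjk
  have hbot : sectionImage (S.proj i) (T.H k) = ⊥ :=
    sectionImage_eq_bot_iff.2 fun x hxS hxT ↦ (hj.eq_one_iff x hxS (T.antitone_H hjk.le hxT)).2
      (T.proj_eq_one_iff.2 (T.antitone_H hjk hxT))
  exact bot_ne_top (hbot.symm.trans hk.sectionImage_left)

theorem eq_of_areLinked {i : S.properSteps} {j k : T.properSteps}
    (hj : AreLinked (S.proj i) (T.proj j)) (hk : AreLinked (S.proj i) (T.proj k)) : j = k :=
  Subtype.ext ((le_of_areLinked hk hj).antisymm (le_of_areLinked hj hk))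

variable (S T)

theorem exists_equiv_properSteps_nonempty_factor_mulEquiv [SeparatelyContinuousMul G]
    [CompactSpace G] :
    ∃ e : S.properSteps ≃ T.properSteps,
      ∀ i : S.properSteps, Nonempty (S.factor i ≃* T.factor (e i)) := by
  choose φ hφ using S.exists_areLinked T
  choose ψ hψ using T.exists_areLinked S
  exact ⟨{
      toFun := φ
      invFun := ψ
      left_inv := fun i ↦ eq_of_areLinked (hψ (φ i)) (hφ i).symm
      right_inv := fun j ↦ eq_of_areLinked (hφ (ψ j)) (hψ j).symm },
    fun i ↦ (hφ i).nonempty_mulEquiv⟩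

end ProfiniteCompositionSeries

theorem profinite_jordan_holder_general [SeparatelyContinuousMul G] [CompactSpace G]
    (A : Type*) [Group A] (S T : ProfiniteCompositionSeries G) :
    Cardinal.mk {i : ℕ // S.H (i + 1) < S.H i ∧ Nonempty (S.factor i ≃* A)} =
      Cardinal.mk {i : ℕ // T.H (i + 1) < T.H i ∧ Nonempty (T.factor i ≃* A)} := by
  obtain ⟨e, he⟩ := S.exists_equiv_properSteps_nonempty_factor_mulEquiv T
  have hfactor (i : S.properSteps) :
      Nonempty (S.factor i ≃* A) ↔ Nonempty (T.factor (e i) ≃* A) :=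
    (he i).elim fun u ↦ ⟨.map u.symm.trans, .map u.trans⟩
  exact Cardinal.mk_congr <|
    (Equiv.subtypeSubtypeEquivSubtypeInter _ _).symm.trans <|
      (e.subtypeEquiv hfactor).trans (Equiv.subtypeSubtypeEquivSubtypeInter _ _)

/-- Jordan–Hölder theorem for second countable profinite groups: any two composition series
have, up to isomorphism and permutation, the same composition factors appearing with the
same (finite or countably infinite) multiplicities. -/
theorem profinite_jordan_holder [IsTopologicalGroup G] [CompactSpace G] [T2Space G]
    [TotallyDisconnectedSpace G] [SecondCountableTopology G]
    (A : Type*) [Group A] [Finite A] [IsSimpleGroup A]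
    (S T : ProfiniteCompositionSeries G) :
    Cardinal.mk {i : ℕ // S.H (i + 1) < S.H i ∧ Nonempty (S.factor i ≃* A)} =
      Cardinal.mk {i : ℕ // T.H (i + 1) < T.H i ∧ Nonempty (T.factor i ≃* A)} :=
  profinite_jordan_holder_general A S T
end

section
/- Let G be a t.d.l.c. group and K a compact normal subgroup of G (so K is closed and the quotient G/K is again a t.d.l.c. group). Then for every g ∈ G, the scale of the coset gK in G/K equals the scale of g in G: s_{G/K}(gK) = s_G(g). -/
/-- The scale of `g`: the minimum of the indices `[U : U ∩ g⁻¹Ug]` over all compact open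
subgroups `U` of `G`. -/
noncomputable def scaleOf (G : Type*) [Group G] [TopologicalSpace G] (g : G) : ℕ :=
  sInf {n : ℕ | ∃ U : Subgroup G, IsCompact (U : Set G) ∧ IsOpen (U : Set G) ∧
    n = (conjSubgroup g U).relIndex U}

/-!
Images and preimages under a homomorphism `f : G →* H` commute with conjugation, and neither of
them increases the indices `[U : U ∩ g⁻¹Ug]`. If `f` is open, it maps compact open subgroups of `G`
to compact open subgroups of `H`, so the scale of `f g` is at most that of `g`; if `f` is proper,
compact open subgroups of `H` pull back to compact open subgroups of `G`, which gives the reverse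
inequality. The quotient map by a compact normal subgroup is both open and proper.
-/

open scoped Pointwise

section Subgroups

variable {G H : Type*} [Group G] [Group H]

theorem mem_conjSubgroup {g x : G} {U : Subgroup G} :
    x ∈ conjSubgroup g U ↔ g * x * g⁻¹ ∈ U :=
  Subgroup.mem_map_equiv.trans (by simp)

theorem map_conjSubgroup (f : G →* H) (g : G) (U : Subgroup G) :
    (conjSubgroup g U).map f = conjSubgroup (f g) (U.map f) := by
  have conj_comm : f.comp (MulAut.conj g⁻¹).toMonoidHom =
      (MulAut.conj (f g)⁻¹).toMonoidHom.comp f := by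
    ext x
    simp
  simp only [conjSubgroup, Subgroup.map_map, conj_comm]

theorem comap_conjSubgroup (f : G →* H) (g : G) (V : Subgroup H) :
    (conjSubgroup (f g) V).comap f = conjSubgroup g (V.comap f) := by
  ext x
  simp [mem_conjSubgroup]

theorem relIndex_map_map_le (f : G →* H) {A B : Subgroup G} (hAB : A.relIndex B ≠ 0) :
    (A.map f).relIndex (B.map f) ≤ A.relIndex B := by
  rw [← Subgroup.relIndex_comap]
  exact Subgroup.relIndex_le_of_le_left (Subgroup.le_comap_map f A) hAB

theorem relIndex_comap_comap_le (f : G →* H) {A B : Subgroup H} (hAB : A.relIndex B ≠ 0) :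
    (A.comap f).relIndex (B.comap f) ≤ A.relIndex B := by
  rw [Subgroup.relIndex_comap]
  exact Subgroup.relIndex_le_of_le_right (Subgroup.map_comap_le f B) hAB

theorem stabilizer_subset_of_one_mem {W : Set G} (hW : 1 ∈ W) :
    (MulAction.stabilizer G W : Set G) ⊆ W := fun x hx ↦ by
  have hxW : x • W = W := hx
  simpa [hxW] using Set.smul_mem_smul_set (a := x) hW

end Subgroups

section CompactOpen

variable {G : Type*} [Group G] [TopologicalSpace G] [IsTopologicalGroup G]

theorem isOpen_conjSubgroup (g : G) {U : Subgroup G} (hU : IsOpen (U : Set G)) :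
    IsOpen (conjSubgroup g U : Set G) := by
  have coe_eq_preimage : (conjSubgroup g U : Set G) = (fun x ↦ g * x * g⁻¹) ⁻¹' U :=
    Set.ext fun _ ↦ mem_conjSubgroup
  rw [coe_eq_preimage]
  exact hU.preimage (by fun_prop)

theorem relIndex_ne_zero_of_isOpen_of_isCompact_s15 {U V : Subgroup G} (hV : IsOpen (V : Set G))
    (hU : IsCompact (U : Set G)) : V.relIndex U ≠ 0 := by
  have : CompactSpace U := isCompact_iff_compactSpace.mp hU
  have : Finite (U ⧸ V.subgroupOf U) :=
    Subgroup.quotient_finite_of_isOpen _ (Subgroup.subgroupOf_isOpen U V hV)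
  exact Subgroup.index_ne_zero_of_finite

theorem relIndex_conjSubgroup_ne_zero (g : G) {U : Subgroup G} (hUc : IsCompact (U : Set G))
    (hUo : IsOpen (U : Set G)) : (conjSubgroup g U).relIndex U ≠ 0 :=
  relIndex_ne_zero_of_isOpen_of_isCompact_s15 (isOpen_conjSubgroup g hUo) hUc

theorem isOpen_stabilizer_of_isCompact_of_isOpen {W : Set G} (hWc : IsCompact W)
    (hWo : IsOpen W) : IsOpen (MulAction.stabilizer G W : Set G) := by
  obtain ⟨V, hV, hVW⟩ := compact_open_separated_mul_left hWc hWo subset_rfl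
  have smul_subset {x : G} (hx : x ∈ V) : x • W ⊆ W :=
    (Set.smul_set_subset_mul hx).trans hVW
  refine Subgroup.isOpen_of_mem_nhds _ (g := 1) ?_
  filter_upwards [hV, inv_mem_nhds_one G hV] with x hx hx_inv
  exact (smul_subset hx).antisymm (Set.subset_smul_set_iff.mpr (smul_subset hx_inv))

/-- **Van Dantzig's theorem**. -/
theorem exists_subgroup_isCompact_isOpen [T2Space G] [TotallyDisconnectedSpace G]
    [LocallyCompactSpace G] :
    ∃ U : Subgroup G, IsCompact (U : Set G) ∧ IsOpen (U : Set G) := by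
  obtain ⟨C, hC, hC_nhds⟩ := exists_compact_mem_nhds (1 : G)
  obtain ⟨W, hW, hW_one, hWC⟩ :=
    loc_compact_Haus_tot_disc_of_zero_dim.mem_nhds_iff.mp hC_nhds
  have hWc : IsCompact W := hC.of_isClosed_subset hW.isClosed hWC
  have hSo := isOpen_stabilizer_of_isCompact_of_isOpen hWc hW.isOpen
  exact ⟨MulAction.stabilizer G W, hWc.of_isClosed_subset (Subgroup.isClosed_of_isOpen _ hSo)
    (stabilizer_subset_of_one_mem hW_one), hSo⟩

theorem isProperMap_quotientGroup_mk {K : Subgroup G} (hK : IsCompact (K : Set G)) :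
    IsProperMap ((↑) : G → G ⧸ K) := by
  refine isProperMap_iff_isClosedMap_and_compact_fibers.mpr
    ⟨QuotientGroup.continuous_mk, QuotientGroup.isClosedMap_coe hK, fun y ↦ ?_⟩
  obtain ⟨a, rfl⟩ := QuotientGroup.mk_surjective y
  rw [← Set.image_singleton, QuotientGroup.preimage_image_mk_eq_mul]
  exact isCompact_singleton.mul hK

end CompactOpen

section Scale

variable {G H : Type*} [Group G] [TopologicalSpace G] [Group H] [TopologicalSpace H]

theorem scaleOf_le_relIndex (g : G) {U : Subgroup G} (hUc : IsCompact (U : Set G))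
    (hUo : IsOpen (U : Set G)) : scaleOf G g ≤ (conjSubgroup g U).relIndex U :=
  Nat.sInf_le ⟨U, hUc, hUo, rfl⟩

theorem exists_relIndex_eq_scaleOf
    (hG : ∃ U : Subgroup G, IsCompact (U : Set G) ∧ IsOpen (U : Set G)) (g : G) :
    ∃ U : Subgroup G, IsCompact (U : Set G) ∧ IsOpen (U : Set G) ∧
      scaleOf G g = (conjSubgroup g U).relIndex U := by
  obtain ⟨U, hUc, hUo⟩ := hG
  have indices_nonempty : {n : ℕ | ∃ U : Subgroup G, IsCompact (U : Set G) ∧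
      IsOpen (U : Set G) ∧ n = (conjSubgroup g U).relIndex U}.Nonempty :=
    ⟨_, U, hUc, hUo, rfl⟩
  exact Nat.sInf_mem indices_nonempty

theorem scaleOf_map_le_of_isOpenMap [IsTopologicalGroup G] {f : G →* H} (hf : Continuous f)
    (hfo : IsOpenMap f) (hG : ∃ U : Subgroup G, IsCompact (U : Set G) ∧ IsOpen (U : Set G))
    (g : G) : scaleOf H (f g) ≤ scaleOf G g := by
  obtain ⟨U, hUc, hUo, hU⟩ := exists_relIndex_eq_scaleOf hG g
  calc
    scaleOf H (f g) ≤ (conjSubgroup (f g) (U.map f)).relIndex (U.map f) :=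
      scaleOf_le_relIndex _ (hUc.image hf) (hfo _ hUo)
    _ = ((conjSubgroup g U).map f).relIndex (U.map f) := by rw [map_conjSubgroup]
    _ ≤ (conjSubgroup g U).relIndex U :=
      relIndex_map_map_le f (relIndex_conjSubgroup_ne_zero g hUc hUo)
    _ = scaleOf G g := hU.symm

theorem scaleOf_le_scaleOf_map_of_isProperMap [IsTopologicalGroup H] {f : G →* H}
    (hf : IsProperMap f) (hH : ∃ V : Subgroup H, IsCompact (V : Set H) ∧ IsOpen (V : Set H))
    (g : G) : scaleOf G g ≤ scaleOf H (f g) := by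
  obtain ⟨V, hVc, hVo, hV⟩ := exists_relIndex_eq_scaleOf hH (f g)
  calc
    scaleOf G g ≤ (conjSubgroup g (V.comap f)).relIndex (V.comap f) :=
      scaleOf_le_relIndex g (hf.isCompact_preimage hVc) (hVo.preimage hf.continuous)
    _ = ((conjSubgroup (f g) V).comap f).relIndex (V.comap f) := by rw [comap_conjSubgroup]
    _ ≤ (conjSubgroup (f g) V).relIndex V :=
      relIndex_comap_comap_le f (relIndex_conjSubgroup_ne_zero (f g) hVc hVo)
    _ = scaleOf H (f g) := hV.symm

theorem scale_quotient_by_compact_normal_general [IsTopologicalGroup G] [IsTopologicalGroup H]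
    {f : G →* H} (hf : IsProperMap f) (hfo : IsOpenMap f)
    (hG : ∃ U : Subgroup G, IsCompact (U : Set G) ∧ IsOpen (U : Set G)) (g : G) :
    scaleOf H (f g) = scaleOf G g := by
  have hH : ∃ V : Subgroup H, IsCompact (V : Set H) ∧ IsOpen (V : Set H) := by
    obtain ⟨U, hUc, hUo⟩ := hG
    exact ⟨U.map f, hUc.image hf.continuous, hfo _ hUo⟩
  exact (scaleOf_map_le_of_isOpenMap hf.continuous hfo hG g).antisymm
    (scaleOf_le_scaleOf_map_of_isProperMap hf hH g)

end Scale

/-- Let `G` be a t.d.l.c. group and `K` a compact normal subgroup of `G`.  Then for every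
`g ∈ G` the scale of the coset `gK` in the quotient t.d.l.c. group `G/K` equals the scale
of `g` in `G`. -/
theorem scale_quotient_by_compact_normal {G : Type*} [Group G] [TopologicalSpace G]
    [IsTopologicalGroup G] [T2Space G] [TotallyDisconnectedSpace G] [LocallyCompactSpace G]
    (K : Subgroup G) [K.Normal] (hKc : IsCompact (K : Set G)) (g : G) :
    scaleOf (G ⧸ K) (↑g) = scaleOf G g :=
  scale_quotient_by_compact_normal_general (f := QuotientGroup.mk' K)
    (isProperMap_quotientGroup_mk hKc) QuotientGroup.isOpenMap_coe
    exists_subgroup_isCompact_isOpen g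
end

section
/- Let G be a compactly generated t.d.l.c. group. Then G has a compact open normal subgroup if and only if there exists a Cayley–Abels graph Γ for G on which the action of G is discrete, i.e., the kernel of the action of G on the vertices of Γ is an open subgroup of G (equivalently, vertex stabilizers of the induced permutation group on the vertices are finite). -/
/-- A Cayley–Abels graph for a topological group `G`. -/
def IsCayleyAbels {G V : Type*} [Group G] [TopologicalSpace G]
    (Γ : SimpleGraph V) (ρ : G →* Equiv.Perm V) : Prop :=
  Γ.Connected ∧ (∀ v : V, (Γ.neighborSet v).Finite) ∧
    (∀ (g : G) (u v : V), Γ.Adj u v → Γ.Adj (ρ g u) (ρ g v)) ∧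
    (∀ u v : V, ∃ g : G, ρ g u = v) ∧
    (∀ v : V, IsCompact {g : G | ρ g v = v} ∧ IsOpen {g : G | ρ g v = v})

universe u

/-! If `K` is a compact open normal subgroup, the image of a compact generating set of `G` in the
discrete group `G ⧸ K` is finite and generates it, so `G` acts through left translations on a
locally finite connected Cayley graph of `G ⧸ K`, with `K` both the kernel and the stabilizer of
every vertex. Conversely, the kernel of the action on a Cayley–Abels graph is an intersection of
compact open (hence closed) vertex stabilizers, so it is always compact, and it is a compact open
normal subgroup as soon as it is open. -/

open SimpleGraph

section CayleyGraph

variable {H : Type*} [Group H] {T : Set H}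

theorem mulCayley_reachable_mul_right {t : H} (ht : t ∈ Subgroup.closure T) (x : H) :
    (mulCayley T).Reachable x (x * t) := by
  induction ht using Subgroup.closure_induction generalizing x with
  | mem t ht =>
    by_cases hx : x = x * t
    · rw [← hx]
    · exact Adj.reachable ((mulCayley_adj' T _ _).2 ⟨hx, t, ht, Or.inl rfl⟩)
  | one => rw [mul_one]
  | mul a b _ _ iha ihb => exact mul_assoc x a b ▸ (iha x).trans (ihb (x * a))
  | inv a _ iha => simpa only [inv_mul_cancel_right] using (iha (x * a⁻¹)).symm

theorem mulCayley_connected (hT : Subgroup.closure T = ⊤) : (mulCayley T).Connected where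
  preconnected x y := by
    have hxy : x⁻¹ * y ∈ Subgroup.closure T := hT ▸ Subgroup.mem_top _
    simpa only [mul_inv_cancel_left] using mulCayley_reachable_mul_right hxy x
  nonempty := ⟨1⟩

theorem finite_neighborSet_mulCayley (hT : T.Finite) (x : H) :
    ((mulCayley T).neighborSet x).Finite := by
  refine ((hT.image (x * ·)).union (hT.image (x * ·⁻¹))).subset fun y hxy => ?_
  obtain ⟨-, t, ht, rfl | rfl⟩ := (mulCayley_adj' T x y).1 hxy
  · exact Or.inl ⟨t, ht, rfl⟩
  · exact Or.inr ⟨t, ht, mul_inv_cancel_right y t⟩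

end CayleyGraph

theorem countable_of_group_fg (H : Type*) [Group H] [Group.FG H] : Countable H := by
  obtain ⟨_, _, _, hφ⟩ := Group.fg_iff_exists_freeGroup_hom_surjective_finite.1 ‹Group.FG H›
  exact hφ.countable

section CayleyAbels

variable {G : Type*} [Group G] [TopologicalSpace G]

theorem isCayleyAbels_mulCayley {H : Type*} [Group H] {φ : G →* H} (hφ : Function.Surjective φ)
    (hcompact : IsCompact (φ.ker : Set G)) (hopen : IsOpen (φ.ker : Set G))
    {T : Set H} (hfin : T.Finite) (hT : Subgroup.closure T = ⊤) :
    IsCayleyAbels (mulCayley T) ((MulAction.toPermHom H H).comp φ) := by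
  refine ⟨mulCayley_connected hT, finite_neighborSet_mulCayley hfin,
    fun _ _ _ => mulCayley_adj_mul_iff_right.2, fun x y => ?_, fun x => ?_⟩
  · obtain ⟨g, hg⟩ := hφ (y * x⁻¹)
    exact ⟨g, by simp [hg]⟩
  · have stabilizer_eq_ker : {g : G | (MulAction.toPermHom H H).comp φ g x = x} = φ.ker := by
      ext g
      simp [MonoidHom.mem_ker]
    exact stabilizer_eq_ker ▸ ⟨hcompact, hopen⟩

variable [SeparatelyContinuousMul G]

theorem group_fg_quotient_of_isOpen {S : Set G} (hS : IsCompact S)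
    (hgen : Subgroup.closure S = ⊤) (N : Subgroup G) [N.Normal] (hN : IsOpen (N : Set G)) :
    Group.FG (G ⧸ N) := by
  have : DiscreteTopology (G ⧸ N) := QuotientGroup.discreteTopology hN
  refine Group.fg_iff.2 ⟨QuotientGroup.mk' N '' S, ?_, ?_⟩
  · rw [← MonoidHom.map_closure, hgen,
      Subgroup.map_top_of_surjective _ (QuotientGroup.mk'_surjective N)]
  · exact (hS.image QuotientGroup.continuous_mk).finite_of_discrete

theorem exists_isCayleyAbels_ker_eq {S : Set G} (hS : IsCompact S)
    (hgen : Subgroup.closure S = ⊤) (K : Subgroup G) [K.Normal]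
    (hcompact : IsCompact (K : Set G)) (hopen : IsOpen (K : Set G)) :
    ∃ (W : Type u) (Γ : SimpleGraph W) (σ : G →* Equiv.Perm W),
      IsCayleyAbels Γ σ ∧ σ.ker = K := by
  have : Group.FG (G ⧸ K) := group_fg_quotient_of_isOpen hS hgen K hopen
  -- Countability lets the Cayley graph live in an arbitrary universe.
  have : Countable (G ⧸ K) := countable_of_group_fg _
  let e : G ⧸ K ≃* Shrink.{u} (G ⧸ K) := Shrink.mulEquiv.symm
  let φ : G →* Shrink.{u} (G ⧸ K) := e.toMonoidHom.comp (QuotientGroup.mk' K)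
  have hφ : Function.Surjective φ := e.surjective.comp (QuotientGroup.mk'_surjective K)
  have ker_φ : φ.ker = K :=
    (MonoidHom.ker_mulEquiv_comp _ e).trans (QuotientGroup.ker_mk' K)
  obtain ⟨T, hT, hfin⟩ := Group.fg_iff.1 (Group.fg_of_surjective (f := e.toMonoidHom) e.surjective)
  refine ⟨_, mulCayley T, (MulAction.toPermHom _ _).comp φ,
    isCayleyAbels_mulCayley hφ (ker_φ.symm ▸ hcompact) (ker_φ.symm ▸ hopen) hfin hT, ?_⟩
  rw [MonoidHom.ker_comp_of_injective _ _ MulAction.toPerm_injective, ker_φ]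

namespace IsCayleyAbels

variable {V : Type*} {Γ : SimpleGraph V} {σ : G →* Equiv.Perm V}

theorem isClosed_ker (h : IsCayleyAbels Γ σ) : IsClosed (σ.ker : Set G) := by
  obtain ⟨-, -, -, -, hstab⟩ := h
  have ker_eq_iInter :
      (σ.ker : Set G) = ⋂ v : V, ((MulAction.stabilizer (Equiv.Perm V) v).comap σ : Set G) := by
    ext g
    simp [MonoidHom.mem_ker, Equiv.ext_iff]
  rw [ker_eq_iInter]
  exact isClosed_iInter fun v => Subgroup.isClosed_of_isOpen _ (hstab v).2

theorem isCompact_ker (h : IsCayleyAbels Γ σ) : IsCompact (σ.ker : Set G) := by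
  have hclosed := h.isClosed_ker
  obtain ⟨hconn, -, -, -, hstab⟩ := h
  obtain ⟨v⟩ := hconn.nonempty
  exact (hstab v).1.of_isClosed_subset hclosed fun g hg =>
    DFunLike.congr_fun (MonoidHom.mem_ker.1 hg) v

end IsCayleyAbels

theorem nearly_discrete_iff_discrete_action_on_CayleyAbels_general
    (hcg : ∃ S : Set G, IsCompact S ∧ Subgroup.closure S = ⊤) :
    (∃ K : Subgroup G, K.Normal ∧ IsCompact (K : Set G) ∧ IsOpen (K : Set G)) ↔
      (∃ (W : Type u) (Γ : SimpleGraph W) (σ : G →* Equiv.Perm W),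
        IsCayleyAbels Γ σ ∧ IsOpen (σ.ker : Set G)) := by
  constructor
  · rintro ⟨K, _, hcompact, hopen⟩
    obtain ⟨S, hS, hgen⟩ := hcg
    obtain ⟨W, Γ, σ, hΓ, rfl⟩ := exists_isCayleyAbels_ker_eq hS hgen K hcompact hopen
    exact ⟨W, Γ, σ, hΓ, hopen⟩
  · rintro ⟨_, _, σ, hΓ, hopen⟩
    exact ⟨σ.ker, inferInstance, hΓ.isCompact_ker, hopen⟩

end CayleyAbels

/-- A compactly generated t.d.l.c. group `G` has a compact open normal subgroup if and
only if there is a Cayley–Abels graph for `G` on which the action of `G` is discrete,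
i.e. the kernel of the action on the vertices is an open subgroup of `G`. -/
theorem nearly_discrete_iff_discrete_action_on_CayleyAbels
    (G : Type*) [Group G] [TopologicalSpace G]
    [IsTopologicalGroup G] [T2Space G] [TotallyDisconnectedSpace G] [LocallyCompactSpace G]
    (hcg : ∃ S : Set G, IsCompact S ∧ Subgroup.closure S = ⊤) :
    (∃ K : Subgroup G, K.Normal ∧ IsCompact (K : Set G) ∧ IsOpen (K : Set G)) ↔
      (∃ (W : Type u) (Γ : SimpleGraph W) (σ : G →* Equiv.Perm W),
        IsCayleyAbels Γ σ ∧ IsOpen (σ.ker : Set G)) :=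
  nearly_discrete_iff_discrete_action_on_CayleyAbels_general hcg
end

section
/- Let G be a t.d.l.c. group and let Γ be a Cayley–Abels graph for G. (i) If the local action of G on Γ is trivial, i.e., for every vertex α each element of the stabilizer G_α fixes every neighbour of α, then every element of a vertex stabilizer fixes every vertex of Γ (the induced permutation group on the vertices acts regularly). (ii) If the local action of G on Γ is free, i.e., for every vertex α each element of G_α that fixes some neighbour of α fixes every neighbour of α, then every element of G fixing two adjacent vertices of Γ fixes every vertex of Γ (the induced permutation group acts freely on the arcs of Γ). In either case the action of G on Γ is discrete: the kernel of the action is open in G. -/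
/-!
Connectedness spreads the local hypothesis along walks. If the local action is trivial, the vertices
fixed by `g` are closed under taking neighbours. If it is free, the same holds for the vertices
that `g` fixes together with some neighbour, because stepping along an edge leaves a fixed neighbour
behind. So the kernel of the action is the intersection of the stabilizers of the two ends of any
edge, and these are open. A trivial local action is free, so this covers both cases; without an
edge, the graph has at most one vertex.
-/

section LocalAction

variable {G V : Type*} [Group G] {Γ : SimpleGraph V} {ρ : G →* Equiv.Perm V}

/-- The local action on `Γ` is trivial: each vertex stabilizer fixes every neighbour of its
vertex. -/
def HasTrivialLocalAction (Γ : SimpleGraph V) (ρ : G →* Equiv.Perm V) : Prop :=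
  ∀ (α : V) (g : G), ρ g α = α → ∀ β ∈ Γ.neighborSet α, ρ g β = β

/-- The local action on `Γ` is free: an element of a vertex stabilizer that fixes some neighbour of
the vertex fixes all of them. Freeness is that of the induced permutation group: a nontrivial
element of the stabilizer may fix all neighbours. -/
def HasFreeLocalAction (Γ : SimpleGraph V) (ρ : G →* Equiv.Perm V) : Prop :=
  ∀ (α : V) (g : G), ρ g α = α → (∃ β ∈ Γ.neighborSet α, ρ g β = β) →
    ∀ β ∈ Γ.neighborSet α, ρ g β = β

theorem of_reachable_of_forall_adj {P : V → Prop} (hP : ∀ ⦃u v⦄, Γ.Adj u v → P u → P v)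
    {u v : V} (huv : Γ.Reachable u v) (hu : P u) : P v := by
  obtain ⟨walk⟩ := huv
  induction walk with
  | nil => exact hu
  | cons hadj _ ih => exact ih (hP hadj hu)

theorem mem_ker_iff_forall_apply_eq_self {g : G} : g ∈ ρ.ker ↔ ∀ v, ρ g v = v := by
  simp only [MonoidHom.mem_ker, Equiv.ext_iff, Equiv.Perm.one_apply]

theorem HasTrivialLocalAction.hasFreeLocalAction (hρ : HasTrivialLocalAction Γ ρ) :
    HasFreeLocalAction Γ ρ :=
  fun α g hα _ => hρ α g hα

theorem HasTrivialLocalAction.apply_eq_self_of_reachable (hρ : HasTrivialLocalAction Γ ρ) {g : G}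
    {α v : V} (hα : ρ g α = α) (hαv : Γ.Reachable α v) : ρ g v = v :=
  of_reachable_of_forall_adj (P := fun u => ρ g u = u) (fun u w huw hu => hρ u g hu w huw) hαv hα

theorem HasFreeLocalAction.apply_eq_self_of_reachable (hρ : HasFreeLocalAction Γ ρ) {g : G}
    {α β v : V} (hαβ : Γ.Adj α β) (hα : ρ g α = α) (hβ : ρ g β = β) (hαv : Γ.Reachable α v) :
    ρ g v = v := by
  let FixedWithNeighbor (u : V) : Prop := ρ g u = u ∧ ∃ w ∈ Γ.neighborSet u, ρ g w = w
  have step : ∀ ⦃u w⦄, Γ.Adj u w → FixedWithNeighbor u → FixedWithNeighbor w :=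
    fun u w huw ⟨hu, hnbr⟩ => ⟨hρ u g hu hnbr w huw, u, huw.symm, hu⟩
  exact (of_reachable_of_forall_adj step hαv ⟨hα, β, hαβ, hβ⟩).1

theorem HasFreeLocalAction.coe_ker_eq_inter (hρ : HasFreeLocalAction Γ ρ) (hΓ : Γ.Preconnected)
    {α β : V} (hαβ : Γ.Adj α β) :
    (ρ.ker : Set G) = {g | ρ g α = α} ∩ {g | ρ g β = β} := by
  ext g
  rw [SetLike.mem_coe, mem_ker_iff_forall_apply_eq_self]
  exact ⟨fun h => ⟨h α, h β⟩,
    fun ⟨hα, hβ⟩ v => hρ.apply_eq_self_of_reachable hαβ hα hβ (hΓ α v)⟩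

theorem HasFreeLocalAction.isOpen_ker [TopologicalSpace G] (hρ : HasFreeLocalAction Γ ρ)
    (hΓ : Γ.Preconnected) (hopen : ∀ v, IsOpen {g | ρ g v = v}) : IsOpen (ρ.ker : Set G) := by
  rcases subsingleton_or_nontrivial V with hV | hV
  · have ker_eq_univ : (ρ.ker : Set G) = Set.univ :=
      Set.eq_univ_of_forall fun g => Subsingleton.elim (ρ g) 1
    exact ker_eq_univ ▸ isOpen_univ
  · obtain ⟨α⟩ := hV.to_nonempty
    obtain ⟨β, hαβ⟩ := hΓ.exists_adj_of_nontrivial α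
    rw [hρ.coe_ker_eq_inter hΓ hαβ]
    exact (hopen α).inter (hopen β)

end LocalAction

theorem trivial_or_free_local_action_discrete_general {G V : Type*} [Group G] [TopologicalSpace G]
    (Γ : SimpleGraph V) (ρ : G →* Equiv.Perm V) (hΓ : Γ.Preconnected)
    (hopen : ∀ v, IsOpen {g | ρ g v = v}) :
    (HasTrivialLocalAction Γ ρ →
      (∀ (α : V) (g : G), ρ g α = α → ∀ v, ρ g v = v) ∧ IsOpen (ρ.ker : Set G)) ∧
    (HasFreeLocalAction Γ ρ →
      (∀ (g : G) (α β : V), Γ.Adj α β → ρ g α = α → ρ g β = β → ∀ v, ρ g v = v) ∧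
        IsOpen (ρ.ker : Set G)) := by
  refine ⟨fun htriv => ⟨?_, htriv.hasFreeLocalAction.isOpen_ker hΓ hopen⟩,
    fun hfree => ⟨?_, hfree.isOpen_ker hΓ hopen⟩⟩
  · exact fun α g hα v => htriv.apply_eq_self_of_reachable hα (hΓ α v)
  · exact fun g α β hαβ hα hβ v => hfree.apply_eq_self_of_reachable hαβ hα hβ (hΓ α v)

/-- Let `G` be a t.d.l.c. group and `Γ` a Cayley–Abels graph for `G`.
(i) If the local action of `G` on `Γ` is trivial, then the induced permutation group acts
regularly: every element of a vertex stabilizer fixes every vertex; (ii) if the local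
action is free, then every element of `G` fixing two adjacent vertices fixes every vertex
(the induced permutation group acts freely on arcs).  In either case the action is
discrete: the kernel of the action is an open subgroup of `G`. -/
theorem trivial_or_free_local_action_discrete {G V : Type*} [Group G] [TopologicalSpace G]
    [IsTopologicalGroup G] [T2Space G] [TotallyDisconnectedSpace G] [LocallyCompactSpace G]
    (Γ : SimpleGraph V) (ρ : G →* Equiv.Perm V) (hCA : IsCayleyAbels Γ ρ) :
    ((∀ (α : V) (g : G), ρ g α = α → ∀ β ∈ Γ.neighborSet α, ρ g β = β) →
      ((∀ (α : V) (g : G), ρ g α = α → ∀ v : V, ρ g v = v) ∧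
        IsOpen (ρ.ker : Set G))) ∧
    ((∀ (α : V) (g : G), ρ g α = α → (∃ β ∈ Γ.neighborSet α, ρ g β = β) →
        ∀ β ∈ Γ.neighborSet α, ρ g β = β) →
      ((∀ (g : G) (α β : V), Γ.Adj α β → ρ g α = α → ρ g β = β → ∀ v : V, ρ g v = v) ∧
        IsOpen (ρ.ker : Set G))) := by
  obtain ⟨hconn, -, -, -, hstab⟩ := hCA
  exact trivial_or_free_local_action_discrete_general Γ ρ hconn.preconnected fun v => (hstab v).2
end
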